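/- Suppose φ ∈ C²(ℝ) and ψ ∈ C¹(ℝ) satisfy conditions (S). Define ω(t) = θ(t)θ(ℓ−t)·(u^D_t(a₂,b₂+t) − u^D_t(a₁,b₁+t)) and ν(t) = θ(t)θ(ℓ−t)·∫₀^t D₂(τ) dτ. Then the function u(x,t) = u^D(x,t) + U(x−a₁, t−b₁) − U(x−a₂, t−b₂), restricted to Ω ∪ {t=0}, is a strengthened classical solution of the slit problem. -/

import Mathlib

/-!
Under conditions (S) the potential has the form `U(x,t) = g(t - |x|) - sign(x) n(t - |x|)`, where
`2 g = D₁ ∘ κ - D₁(0)`, `2 n = (∫₀ D₂) ∘ κ` and `κ` truncates to `[0, ℓ]`. Composing a `C²` function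
with `κ` yields a `C²` function as soon as its first two derivatives vanish at `0` and `ℓ`
(`contDiff_comp_clampTo`); conditions (S) say exactly this for `D₁` and for the primitive of `D₂`
vanishing at both ends, so `g` and `n` are `C²` (`exists_Ufun_profiles`).

Consequently each shifted potential is, near every point off its slit, one of the travelling
waves `(g - n)(t - x)`, `(g + n)(t + x)`, or a constant (`waveWithin_shift`). The d'Alembert solution
is a sum of travelling waves too, so regularity and the wave equation are local facts about
`f(x + t) + h(x - t)` with `f`, `h` of class `C²`.

On each side of a slit `u` coincides with such a wave, whose value and derivatives give
the one-sided limits (`sideLim_of_wave`). Near slit 1 the second potential is zero; near slit 2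
the first one is the constant `(D₁(ℓ) - D₁(0)) / 2 = -D₁(0)`, because `b₂ > b₁ + ℓ + a₂ - a₁`.
The gluing conditions then reduce to `D₁ = 2 g + D₁(0)` and `D₂ = 2 n'` on `[0, ℓ]`.
-/

open Set Filter Topology MeasureTheory intervalIntegral

noncomputable section

/-- The closed vertical slit with foot `(A, B)` and length `ℓ`. -/
def slit (A B ℓ : ℝ) : Set (ℝ × ℝ) := {p : ℝ × ℝ | p.1 = A ∧ p.2 ∈ Set.Icc B (B + ℓ)}

/-- The open upper half plane minus the two closed slits. -/
def slitOmega (a₁ a₂ b₁ b₂ ℓ : ℝ) : Set (ℝ × ℝ) :=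
  {p : ℝ × ℝ | 0 < p.2} \ (slit a₁ b₁ ℓ ∪ slit a₂ b₂ ℓ)

/-- Partial derivative in the first (space) variable. -/
def uX (u : ℝ → ℝ → ℝ) (x t : ℝ) : ℝ := deriv (fun y => u y t) x

/-- Partial derivative in the second (time) variable. -/
def uT (u : ℝ → ℝ → ℝ) (x t : ℝ) : ℝ := deriv (fun s => u x s) t

/-- Second partial derivative in space. -/
def uXX (u : ℝ → ℝ → ℝ) (x t : ℝ) : ℝ := deriv (fun y => uX u y t) x

/-- Second partial derivative in time. -/
def uTT (u : ℝ → ℝ → ℝ) (x t : ℝ) : ℝ := deriv (fun s => uT u x s) t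

/-- The open half-plane to the right of the vertical line `x = A`. -/
def rightSide (A : ℝ) : Set (ℝ × ℝ) := {p : ℝ × ℝ | A < p.1}

/-- The open half-plane to the left of the vertical line `x = A`. -/
def leftSide (A : ℝ) : Set (ℝ × ℝ) := {p : ℝ × ℝ | p.1 < A}

/-- `F(x,τ) → L` as `(x,τ) → (A, τ₀)` within `O ∩ S` (a one-sided two-dimensional limit). -/
def HasSideLim (O : Set (ℝ × ℝ)) (F : ℝ → ℝ → ℝ) (A τ₀ : ℝ) (S : Set (ℝ × ℝ)) (L : ℝ) : Prop :=
  Filter.Tendsto (fun p : ℝ × ℝ => F p.1 p.2) (𝓝[O ∩ S] (A, τ₀)) (𝓝 L)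

/-- All one-sided two-dimensional limits of `F` along the slit with foot `(A, B)` and
length `ℓ` exist (from the right and from the left), within `O`. -/
def KLim (O : Set (ℝ × ℝ)) (F : ℝ → ℝ → ℝ) (A B ℓ : ℝ) : Prop :=
  ∀ t ∈ Set.Icc (0 : ℝ) ℓ,
    (∃ L : ℝ, HasSideLim O F A (B + t) (rightSide A) L) ∧
    (∃ L : ℝ, HasSideLim O F A (B + t) (leftSide A) L)

/-- The class `𝒦`: `u ∈ C²(Ω) ∩ C¹(Ω ∪ {t = 0})` such that for `i = 1, 2` and every
`t ∈ [0, ℓ]` the two-dimensional limits of `u`, `u_x`, `u_t` at `(a_i, b_i + t)` within `Ω`,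
from the side `x > a_i` and from the side `x < a_i`, all exist. -/
def IsClassK (a₁ a₂ b₁ b₂ ℓ : ℝ) (u : ℝ → ℝ → ℝ) : Prop :=
  ContDiffOn ℝ 2 (fun p : ℝ × ℝ => u p.1 p.2) (slitOmega a₁ a₂ b₁ b₂ ℓ) ∧
  ContDiffOn ℝ 1 (fun p : ℝ × ℝ => u p.1 p.2)
    (slitOmega a₁ a₂ b₁ b₂ ℓ ∪ {p : ℝ × ℝ | p.2 = 0}) ∧
  KLim (slitOmega a₁ a₂ b₁ b₂ ℓ) u a₁ b₁ ℓ ∧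
  KLim (slitOmega a₁ a₂ b₁ b₂ ℓ) u a₂ b₂ ℓ ∧
  KLim (slitOmega a₁ a₂ b₁ b₂ ℓ) (uX u) a₁ b₁ ℓ ∧
  KLim (slitOmega a₁ a₂ b₁ b₂ ℓ) (uX u) a₂ b₂ ℓ ∧
  KLim (slitOmega a₁ a₂ b₁ b₂ ℓ) (uT u) a₁ b₁ ℓ ∧
  KLim (slitOmega a₁ a₂ b₁ b₂ ℓ) (uT u) a₂ b₂ ℓ

/-- The Heaviside step function: `θ(s) = 1` for `s > 0` and `θ(s) = 0` for `s ≤ 0`. -/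
def heav (s : ℝ) : ℝ := if 0 < s then 1 else 0

/-- `U(x,t) = θ(t−|x|)·(½∫₀^{t−|x|} ω(τ) dτ − ½ sign(x) ν(t−|x|))`. -/
def Ufun (ω ν : ℝ → ℝ) (x t : ℝ) : ℝ :=
  heav (t - |x|) *
    ((∫ τ in (0 : ℝ)..(t - |x|), ω τ) / 2 - Real.sign x * ν (t - |x|) / 2)

/-- The d'Alembert solution `u^D(x,t) = ½(φ(x+t) + φ(x−t)) + ½∫_{x−t}^{x+t} ψ`. -/
def uD (φ ψ : ℝ → ℝ) (x t : ℝ) : ℝ :=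
  (φ (x + t) + φ (x - t)) / 2 + (∫ s in (x - t)..(x + t), ψ s) / 2

/-- `D₁(t) = u^D(a₂, b₂+t) − u^D(a₁, b₁+t)`. -/
def D1fun (φ ψ : ℝ → ℝ) (a₁ a₂ b₁ b₂ : ℝ) (t : ℝ) : ℝ :=
  uD φ ψ a₂ (b₂ + t) - uD φ ψ a₁ (b₁ + t)

/-- `D₂(t) = u^D_x(a₂, b₂+t) − u^D_x(a₁, b₁+t)`. -/
def D2fun (φ ψ : ℝ → ℝ) (a₁ a₂ b₁ b₂ : ℝ) (t : ℝ) : ℝ :=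
  uX (uD φ ψ) a₂ (b₂ + t) - uX (uD φ ψ) a₁ (b₁ + t)

/-- Conditions (S) on the initial data. -/
def CondS (a₁ a₂ b₁ b₂ ℓ : ℝ) (φ ψ : ℝ → ℝ) : Prop :=
  deriv (D1fun φ ψ a₁ a₂ b₁ b₂) 0 = 0 ∧ deriv (D1fun φ ψ a₁ a₂ b₁ b₂) ℓ = 0 ∧
  D1fun φ ψ a₁ a₂ b₁ b₂ 0 + D1fun φ ψ a₁ a₂ b₁ b₂ ℓ = 0 ∧
  deriv (deriv (D1fun φ ψ a₁ a₂ b₁ b₂)) 0 = 0 ∧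
  deriv (deriv (D1fun φ ψ a₁ a₂ b₁ b₂)) ℓ = 0 ∧
  (∫ τ in (0 : ℝ)..ℓ, D2fun φ ψ a₁ a₂ b₁ b₂ τ) = 0 ∧
  D2fun φ ψ a₁ a₂ b₁ b₂ 0 = 0 ∧ D2fun φ ψ a₁ a₂ b₁ b₂ ℓ = 0 ∧
  deriv (D2fun φ ψ a₁ a₂ b₁ b₂) 0 = 0 ∧ deriv (D2fun φ ψ a₁ a₂ b₁ b₂) ℓ = 0

/-- A strengthened classical solution of the slit problem: `u ∈ 𝒦`, `u` satisfies the wave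
equation on `Ω`, the initial conditions, and the gluing conditions
(26)–(29) on the closed interval `[0, ℓ]` of slit times (each expressed as the existence of a
common one-sided two-dimensional limit on the matched slit edges). -/
def IsStrongSolution (a₁ a₂ b₁ b₂ ℓ : ℝ) (φ ψ : ℝ → ℝ) (u : ℝ → ℝ → ℝ) : Prop :=
  IsClassK a₁ a₂ b₁ b₂ ℓ u ∧
  (∀ p ∈ slitOmega a₁ a₂ b₁ b₂ ℓ, uTT u p.1 p.2 = uXX u p.1 p.2) ∧
  (∀ x : ℝ, u x 0 = φ x) ∧ (∀ x : ℝ, uT u x 0 = ψ x) ∧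
  ∀ t ∈ Set.Icc (0 : ℝ) ℓ,
    (∃ L : ℝ, HasSideLim (slitOmega a₁ a₂ b₁ b₂ ℓ) u a₁ (b₁ + t) (leftSide a₁) L ∧
      HasSideLim (slitOmega a₁ a₂ b₁ b₂ ℓ) u a₂ (b₂ + t) (rightSide a₂) L) ∧
    (∃ L : ℝ, HasSideLim (slitOmega a₁ a₂ b₁ b₂ ℓ) u a₁ (b₁ + t) (rightSide a₁) L ∧
      HasSideLim (slitOmega a₁ a₂ b₁ b₂ ℓ) u a₂ (b₂ + t) (leftSide a₂) L) ∧
    (∃ L : ℝ, HasSideLim (slitOmega a₁ a₂ b₁ b₂ ℓ) (uX u) a₁ (b₁ + t) (leftSide a₁) L ∧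
      HasSideLim (slitOmega a₁ a₂ b₁ b₂ ℓ) (uX u) a₂ (b₂ + t) (rightSide a₂) L) ∧
    (∃ L : ℝ, HasSideLim (slitOmega a₁ a₂ b₁ b₂ ℓ) (uX u) a₁ (b₁ + t) (rightSide a₁) L ∧
      HasSideLim (slitOmega a₁ a₂ b₁ b₂ ℓ) (uX u) a₂ (b₂ + t) (leftSide a₂) L)

/-- The jump `ω(t) = θ(t)θ(ℓ−t)·(u^D_t(a₂, b₂+t) − u^D_t(a₁, b₁+t))`. -/
def omegaFun (φ ψ : ℝ → ℝ) (a₁ a₂ b₁ b₂ ℓ : ℝ) (t : ℝ) : ℝ :=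
  heav t * heav (ℓ - t) * (uT (uD φ ψ) a₂ (b₂ + t) - uT (uD φ ψ) a₁ (b₁ + t))

/-- The jump `ν(t) = θ(t)θ(ℓ−t)·∫₀^t D₂(τ) dτ`. -/
def nuFun (φ ψ : ℝ → ℝ) (a₁ a₂ b₁ b₂ ℓ : ℝ) (t : ℝ) : ℝ :=
  heav t * heav (ℓ - t) * ∫ τ in (0 : ℝ)..t, D2fun φ ψ a₁ a₂ b₁ b₂ τ

/-- The superposition `f (x + t) + h (x - t)` of two travelling waves. -/
def travel (f h : ℝ → ℝ) (x t : ℝ) : ℝ := f (x + t) + h (x - t)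

/-- Near `p`, inside `S`, the function `u` is a superposition of two `C²` travelling waves. -/
def WaveWithin (S : Set (ℝ × ℝ)) (u : ℝ → ℝ → ℝ) (p : ℝ × ℝ) : Prop :=
  ∃ f h : ℝ → ℝ, ContDiff ℝ 2 f ∧ ContDiff ℝ 2 h ∧
    ∀ᶠ q in 𝓝[S] p, u q.1 q.2 = travel f h q.1 q.2

/-- Truncation of a real number to `[0, ℓ]`. -/
def clampTo (ℓ s : ℝ) : ℝ := max 0 (min s ℓ)

/-! ### Travelling waves and their derivatives -/

theorem hasDerivAt_travel_x {f h : ℝ → ℝ} (hf : Differentiable ℝ f) (hh : Differentiable ℝ h)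
    (x t : ℝ) : HasDerivAt (fun y => travel f h y t) (travel (deriv f) (deriv h) x t) x :=
  ((hf (x + t)).hasDerivAt.comp_add_const x t).add ((hh (x - t)).hasDerivAt.comp_sub_const x t)

theorem hasDerivAt_travel_t {f h : ℝ → ℝ} (hf : Differentiable ℝ f) (hh : Differentiable ℝ h)
    (x t : ℝ) : HasDerivAt (fun s => travel f h x s) (travel (deriv f) (-deriv h) x t) t :=
  ((hf (x + t)).hasDerivAt.comp_const_add x t).add ((hh (x - t)).hasDerivAt.comp_const_sub x t)

theorem uX_travel {f h : ℝ → ℝ} (hf : Differentiable ℝ f) (hh : Differentiable ℝ h) :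
    uX (travel f h) = travel (deriv f) (deriv h) := by
  funext x t
  exact (hasDerivAt_travel_x hf hh x t).deriv

theorem uT_travel {f h : ℝ → ℝ} (hf : Differentiable ℝ f) (hh : Differentiable ℝ h) :
    uT (travel f h) = travel (deriv f) (-deriv h) := by
  funext x t
  exact (hasDerivAt_travel_t hf hh x t).deriv

theorem contDiff_deriv_one {f : ℝ → ℝ} (hf : ContDiff ℝ 2 f) : ContDiff ℝ 1 (deriv f) :=
  (contDiff_succ_iff_deriv.1 (show ContDiff ℝ (1 + 1) f by simpa [one_add_one_eq_two] using hf)).2.2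

theorem contDiff_two_of_deriv {f g : ℝ → ℝ} (h : ∀ x, HasDerivAt f (g x) x)
    (hg : ContDiff ℝ 1 g) : ContDiff ℝ 2 f := by
  have e : deriv f = g := funext fun x => (h x).deriv
  have : ContDiff ℝ (1 + 1) f :=
    contDiff_succ_iff_deriv.2 ⟨fun x => (h x).differentiableAt, by simp, e ▸ hg⟩
  simpa [one_add_one_eq_two] using this

theorem uTT_travel {f h : ℝ → ℝ} (hf : ContDiff ℝ 2 f) (hh : ContDiff ℝ 2 h) (x t : ℝ) :
    uT (uT (travel f h)) x t = uX (uX (travel f h)) x t := by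
  have hf' := (contDiff_deriv_one hf).differentiable one_ne_zero
  have hh' := (contDiff_deriv_one hh).differentiable one_ne_zero
  have hf0 := hf.differentiable two_ne_zero
  have hh0 := hh.differentiable two_ne_zero
  rw [uT_travel hf0 hh0, uX_travel hf0 hh0, uT_travel hf' hh'.neg, uX_travel hf' hh']
  simp [travel, deriv.neg']

theorem contDiff_travel {n : WithTop ℕ∞} {f h : ℝ → ℝ} (hf : ContDiff ℝ n f)
    (hh : ContDiff ℝ n h) : ContDiff ℝ n (fun p : ℝ × ℝ => travel f h p.1 p.2) :=
  (hf.comp (contDiff_fst.add contDiff_snd)).add (hh.comp (contDiff_fst.sub contDiff_snd))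

theorem continuous_travel {f h : ℝ → ℝ} (hf : Continuous f) (hh : Continuous h) :
    Continuous (fun p : ℝ × ℝ => travel f h p.1 p.2) := by
  unfold travel
  fun_prop

/-! ### Locality of the partial derivatives -/

theorem uX_congr {u v : ℝ → ℝ → ℝ} {p : ℝ × ℝ} (h : ∀ᶠ q in 𝓝 p, u q.1 q.2 = v q.1 q.2) :
    uX u p.1 p.2 = uX v p.1 p.2 := by
  have hc : Tendsto (fun y : ℝ => (y, p.2)) (𝓝 p.1) (𝓝 p) :=
    (Continuous.prodMk_left p.2).tendsto p.1
  exact Filter.EventuallyEq.deriv_eq (hc.eventually h)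

theorem uT_congr {u v : ℝ → ℝ → ℝ} {p : ℝ × ℝ} (h : ∀ᶠ q in 𝓝 p, u q.1 q.2 = v q.1 q.2) :
    uT u p.1 p.2 = uT v p.1 p.2 := by
  have hc : Tendsto (fun s : ℝ => (p.1, s)) (𝓝 p.2) (𝓝 p) :=
    (Continuous.prodMk_right p.1).tendsto p.2
  exact Filter.EventuallyEq.deriv_eq (hc.eventually h)

theorem eventually_nhds_of_within {S : Set (ℝ × ℝ)} (hS : IsOpen S) {P : ℝ × ℝ → Prop}
    {p : ℝ × ℝ} (h : ∀ᶠ q in 𝓝[S] p, P q) : ∀ᶠ q in 𝓝[S] p, ∀ᶠ r in 𝓝 q, P r := by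
  filter_upwards [eventually_eventually_nhdsWithin.2 h, self_mem_nhdsWithin] with q hq hqS
  rwa [hS.nhdsWithin_eq hqS] at hq

/-- A function that is a travelling wave inside the open set `S` near `p` inherits the limits at
`p` of that wave and of its first derivatives. -/
theorem sideLim_of_wave {O S : Set (ℝ × ℝ)} (hS : IsOpen S) {u : ℝ → ℝ → ℝ} {A τ : ℝ}
    {f h : ℝ → ℝ} (hf : ContDiff ℝ 2 f) (hh : ContDiff ℝ 2 h)
    (he : ∀ᶠ q in 𝓝[S] (A, τ), u q.1 q.2 = travel f h q.1 q.2) :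
    HasSideLim O u A τ S (travel f h A τ) ∧
    HasSideLim O (uX u) A τ S (travel (deriv f) (deriv h) A τ) ∧
    HasSideLim O (uT u) A τ S (travel (deriv f) (-deriv h) A τ) := by
  have hf' := (contDiff_deriv_one hf).continuous
  have hh' := (contDiff_deriv_one hh).continuous
  have hf0 := hf.differentiable two_ne_zero
  have hh0 := hh.differentiable two_ne_zero
  have hle : 𝓝[O ∩ S] (A, τ) ≤ 𝓝[S] (A, τ) := nhdsWithin_mono _ inter_subset_right
  have key : ∀ (w : ℝ → ℝ → ℝ) (f h : ℝ → ℝ), Continuous f → Continuous h →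
      (∀ᶠ q in 𝓝[S] (A, τ), w q.1 q.2 = travel f h q.1 q.2) →
      HasSideLim O w A τ S (travel f h A τ) := by
    intro w f h hf hh hw
    have h1 : Tendsto (fun p : ℝ × ℝ => travel f h p.1 p.2) (𝓝[O ∩ S] (A, τ))
        (𝓝 (travel f h A τ)) :=
      ((continuous_travel hf hh).tendsto (A, τ)).mono_left nhdsWithin_le_nhds
    exact h1.congr' ((hw.filter_mono hle).mono fun q hq => Eq.symm hq)
  refine ⟨key _ _ _ hf.continuous hh.continuous he, key _ _ _ hf' hh' ?_,
    key _ _ _ hf' hh'.neg ?_⟩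
  · filter_upwards [eventually_nhds_of_within hS he] with q hq
    rw [uX_congr hq, uX_travel hf0 hh0]
  · filter_upwards [eventually_nhds_of_within hS he] with q hq
    rw [uT_congr hq, uT_travel hf0 hh0]

theorem WaveWithin.contDiffAt {u : ℝ → ℝ → ℝ} {p : ℝ × ℝ} (h : WaveWithin univ u p) :
    ContDiffAt ℝ 2 (fun q : ℝ × ℝ => u q.1 q.2) p := by
  obtain ⟨f, h, hf, hh, he⟩ := h
  rw [nhdsWithin_univ] at he
  exact (contDiff_travel hf hh).contDiffAt.congr_of_eventuallyEq he

theorem WaveWithin.wave_eq {u : ℝ → ℝ → ℝ} {p : ℝ × ℝ} (h : WaveWithin univ u p) :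
    uTT u p.1 p.2 = uXX u p.1 p.2 := by
  obtain ⟨f, h, hf, hh, he⟩ := h
  rw [nhdsWithin_univ] at he
  have h2 := eventually_eventually_nhds.2 he
  have hT : uT (uT u) p.1 p.2 = uT (uT (travel f h)) p.1 p.2 :=
    uT_congr (h2.mono fun q hq => uT_congr hq)
  have hX : uX (uX u) p.1 p.2 = uX (uX (travel f h)) p.1 p.2 :=
    uX_congr (h2.mono fun q hq => uX_congr hq)
  change uT (uT u) p.1 p.2 = uX (uX u) p.1 p.2
  rw [hT, hX, uTT_travel hf hh]

theorem WaveWithin.sub {S : Set (ℝ × ℝ)} {u v : ℝ → ℝ → ℝ} {p : ℝ × ℝ} (hu : WaveWithin S u p)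
    (hv : WaveWithin S v p) : WaveWithin S (fun x t => u x t - v x t) p := by
  obtain ⟨f, h, hf, hh, he⟩ := hu
  obtain ⟨f', h', hf', hh', he'⟩ := hv
  refine ⟨f - f', h - h', hf.sub hf', hh.sub hh', ?_⟩
  filter_upwards [he, he'] with q h1 h2
  simp only [h1, h2, travel, Pi.sub_apply]
  ring

theorem WaveWithin.add {S : Set (ℝ × ℝ)} {u v : ℝ → ℝ → ℝ} {p : ℝ × ℝ} (hu : WaveWithin S u p)
    (hv : WaveWithin S v p) : WaveWithin S (fun x t => u x t + v x t) p := by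
  obtain ⟨f, h, hf, hh, he⟩ := hu
  obtain ⟨f', h', hf', hh', he'⟩ := hv
  refine ⟨f + f', h + h', hf.add hf', hh.add hh', ?_⟩
  filter_upwards [he, he'] with q h1 h2
  simp only [h1, h2, travel, Pi.add_apply]
  ring

/-! ### Truncation preserves `C²` under vanishing derivatives at the endpoints -/

theorem clampTo_of_nonpos {ℓ s : ℝ} (hs : s ≤ 0) : clampTo ℓ s = 0 :=
  max_eq_left ((min_le_left _ _).trans hs)

theorem clampTo_of_ge {ℓ s : ℝ} (hℓ : 0 < ℓ) (hs : ℓ ≤ s) : clampTo ℓ s = ℓ := by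
  simp [clampTo, min_eq_right hs, hℓ.le]

theorem clampTo_of_mem {ℓ s : ℝ} (h0 : 0 ≤ s) (hs : s ≤ ℓ) : clampTo ℓ s = s := by
  simp [clampTo, min_eq_left hs, h0]

theorem continuous_clampTo (ℓ : ℝ) : Continuous (clampTo ℓ) := by
  unfold clampTo
  fun_prop

theorem abs_clampTo_sub_le (ℓ s r : ℝ) : |clampTo ℓ s - clampTo ℓ r| ≤ |s - r| := by
  unfold clampTo
  refine (abs_max_sub_max_le_max _ _ _ _).trans ?_
  simpa using abs_min_sub_min_le_max s ℓ r ℓ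

/-- Where `g'` vanishes at the truncated point, the `1`-Lipschitz truncation keeps the
derivative equal to zero; elsewhere truncation is locally the identity. -/
theorem hasDerivAt_comp_clampTo {ℓ : ℝ} (hℓ : 0 < ℓ) {g g' : ℝ → ℝ}
    (hg : ∀ x, HasDerivAt g (g' x) x) (h0 : g' 0 = 0) (h1 : g' ℓ = 0) (s : ℝ) :
    HasDerivAt (fun s => g (clampTo ℓ s)) (g' (clampTo ℓ s)) s := by
  have hz : g' (clampTo ℓ s) = 0 →
      HasDerivAt (fun s => g (clampTo ℓ s)) (g' (clampTo ℓ s)) s := by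
    intro hz
    have h := hg (clampTo ℓ s)
    rw [hz] at h ⊢
    rw [hasDerivAt_iff_isLittleO] at h ⊢
    simp only [smul_zero, sub_zero] at h ⊢
    refine (h.comp_tendsto ((continuous_clampTo ℓ).tendsto s)).trans_isBigO ?_
    refine Asymptotics.IsBigO.of_bound 1 (Eventually.of_forall fun r => ?_)
    simpa using abs_clampTo_sub_le ℓ r s
  rcases le_or_gt s 0 with hs | hs
  · exact hz (by rw [clampTo_of_nonpos hs, h0])
  rcases le_or_gt ℓ s with hs' | hs'
  · exact hz (by rw [clampTo_of_ge hℓ hs', h1])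
  rw [clampTo_of_mem hs.le hs'.le]
  refine (hg s).congr_of_eventuallyEq ?_
  filter_upwards [Ioo_mem_nhds hs hs'] with r hr
  rw [clampTo_of_mem hr.1.le hr.2.le]

theorem contDiff_comp_clampTo {ℓ : ℝ} (hℓ : 0 < ℓ) {g : ℝ → ℝ} (hg : ContDiff ℝ 2 g)
    (h0 : deriv g 0 = 0) (h1 : deriv g ℓ = 0) (h0' : deriv (deriv g) 0 = 0)
    (h1' : deriv (deriv g) ℓ = 0) : ContDiff ℝ 2 (fun s => g (clampTo ℓ s)) := by
  have hg' := contDiff_deriv_one hg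
  refine contDiff_two_of_deriv (hasDerivAt_comp_clampTo hℓ
    (fun x => (hg.differentiable two_ne_zero x).hasDerivAt) h0 h1) ?_
  have hd := hasDerivAt_comp_clampTo hℓ
    (fun x => (hg'.differentiable one_ne_zero x).hasDerivAt) h0' h1'
  refine contDiff_one_iff_deriv.2 ⟨fun x => (hd x).differentiableAt, ?_⟩
  rw [funext fun x => (hd x).deriv]
  exact (contDiff_one_iff_deriv.1 hg').2.comp (continuous_clampTo ℓ)

/-! ### The d'Alembert solution -/

/-- The d'Alembert solution is a superposition of two travelling `C²` waves, whose difference of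
derivatives at `t = 0` is the initial velocity. -/
theorem exists_uD_eq {φ ψ : ℝ → ℝ} (hφ : ContDiff ℝ 2 φ) (hψ : ContDiff ℝ 1 ψ) :
    ∃ F H : ℝ → ℝ, ContDiff ℝ 2 F ∧ ContDiff ℝ 2 H ∧ uD φ ψ = travel F H ∧
      ∀ x, travel (deriv F) (-deriv H) x 0 = ψ x := by
  have hI : ∀ x, HasDerivAt (fun y => ∫ s in (0 : ℝ)..y, ψ s) (ψ x) x := fun x =>
    hψ.continuous.integral_hasStrictDerivAt 0 x |>.hasDerivAt
  have hI2 := contDiff_two_of_deriv hI hψ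
  have hφ1 := hφ.differentiable two_ne_zero
  refine ⟨fun y => φ y / 2 + (∫ s in (0 : ℝ)..y, ψ s) / 2,
    fun y => φ y / 2 - (∫ s in (0 : ℝ)..y, ψ s) / 2, (hφ.div_const 2).add (hI2.div_const 2),
    (hφ.div_const 2).sub (hI2.div_const 2), ?_, ?_⟩
  · funext x t
    have := integral_interval_sub_left (hψ.continuous.intervalIntegrable (μ := volume) 0 (x + t))
      (hψ.continuous.intervalIntegrable 0 (x - t))
    simp only [uD, travel, ← this]
    ring
  · intro x
    have h1 := (((hφ1 x).hasDerivAt.div_const 2).add ((hI x).div_const 2)).deriv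
    have h2 := (((hφ1 x).hasDerivAt.div_const 2).sub ((hI x).div_const 2)).deriv
    have h1' : deriv (fun y => φ y / 2 + (∫ s in (0 : ℝ)..y, ψ s) / 2) x
      = deriv φ x / 2 + ψ x / 2 := h1
    have h2' : deriv (fun y => φ y / 2 - (∫ s in (0 : ℝ)..y, ψ s) / 2) x
      = deriv φ x / 2 - ψ x / 2 := h2
    simp only [travel, add_zero, sub_zero, Pi.neg_apply, h1', h2']
    ring

/-! ### The slit potential -/

/-- Under conditions (S) the potential `U` is built from two `C²` profiles `g`, `n` on the line,
which vanish for negative arguments and are constant (`n` being zero) past `ℓ`; on `[0, ℓ]` their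
values encode the jumps across the slit. -/
theorem exists_Ufun_profiles {a₁ a₂ b₁ b₂ ℓ : ℝ} (hℓ : 0 < ℓ) {φ ψ : ℝ → ℝ}
    (hφ : ContDiff ℝ 2 φ) (hψ : ContDiff ℝ 1 ψ) (hS : CondS a₁ a₂ b₁ b₂ ℓ φ ψ) :
    ∃ g n : ℝ → ℝ, ContDiff ℝ 2 g ∧ ContDiff ℝ 2 n ∧
      (∀ s ≤ 0, g s = 0 ∧ n s = 0) ∧
      (∀ s, ℓ ≤ s → g s = -D1fun φ ψ a₁ a₂ b₁ b₂ 0 ∧ n s = 0) ∧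
      (∀ s ∈ Icc 0 ℓ, 2 * g s = D1fun φ ψ a₁ a₂ b₁ b₂ s - D1fun φ ψ a₁ a₂ b₁ b₂ 0 ∧
        2 * deriv n s = D2fun φ ψ a₁ a₂ b₁ b₂ s) ∧
      ∀ x t, Ufun (omegaFun φ ψ a₁ a₂ b₁ b₂ ℓ) (nuFun φ ψ a₁ a₂ b₁ b₂ ℓ) x t =
        g (t - |x|) - Real.sign x * n (t - |x|) := by
  obtain ⟨F, H, hF, hH, hFH, -⟩ := exists_uD_eq hφ hψ
  have hF0 := hF.differentiable two_ne_zero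
  have hH0 := hH.differentiable two_ne_zero
  have hF1 := contDiff_deriv_one hF
  have hH1 := contDiff_deriv_one hH
  obtain ⟨s1, s2, s3, s4, s5, s6, s7, s8, s9, s10⟩ := hS
  have hωD : ∀ t, uT (uD φ ψ) a₂ (b₂ + t) - uT (uD φ ψ) a₁ (b₁ + t)
      = deriv (D1fun φ ψ a₁ a₂ b₁ b₂) t := by
    intro t
    rw [hFH, uT_travel hF0 hH0]
    refine (HasDerivAt.deriv ?_).symm
    have h := ((hasDerivAt_travel_t hF0 hH0 a₂ (b₂ + t)).comp_const_add b₂ t).sub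
      ((hasDerivAt_travel_t hF0 hH0 a₁ (b₁ + t)).comp_const_add b₁ t)
    unfold D1fun
    rw [hFH]
    exact h
  have hD1 : ContDiff ℝ 2 (D1fun φ ψ a₁ a₂ b₁ b₂) := by
    unfold D1fun
    rw [hFH]
    unfold travel
    fun_prop
  have hD2 : ContDiff ℝ 1 (D2fun φ ψ a₁ a₂ b₁ b₂) := by
    unfold D2fun
    rw [hFH, uX_travel hF0 hH0]
    unfold travel
    fun_prop
  set D₁ := D1fun φ ψ a₁ a₂ b₁ b₂ with hD₁
  set D₂ := D2fun φ ψ a₁ a₂ b₁ b₂ with hD₂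
  set J : ℝ → ℝ := fun t => ∫ τ in (0 : ℝ)..t, D₂ τ with hJ
  have hJd : ∀ x, HasDerivAt J (D₂ x) x := fun x =>
    (hD2.continuous.integral_hasStrictDerivAt 0 x).hasDerivAt
  have hJ2 : ContDiff ℝ 2 J := contDiff_two_of_deriv hJd hD2
  have hJ' : deriv J = D₂ := funext fun x => (hJd x).deriv
  have hJ0 : J 0 = 0 := by simp [hJ]
  have hD1d : ∀ x, HasDerivAt D₁ (deriv D₁ x) x :=
    fun x => (hD1.differentiable two_ne_zero x).hasDerivAt
  -- `D₁'` vanishes at both endpoints, so the cutoff in `ω` amounts to truncating the argument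
  have hω : omegaFun φ ψ a₁ a₂ b₁ b₂ ℓ = fun t => deriv D₁ (clampTo ℓ t) := by
    funext t
    unfold omegaFun heav
    rw [hωD]
    rcases le_or_gt t 0 with ht | ht
    · simp [clampTo_of_nonpos ht, not_lt.2 ht, s1]
    rcases le_or_gt ℓ t with ht' | ht'
    · simp [clampTo_of_ge hℓ ht', not_lt.2 ht', s2]
    · simp [clampTo_of_mem ht.le ht'.le, ht, ht']
  have hν : nuFun φ ψ a₁ a₂ b₁ b₂ ℓ = fun t => J (clampTo ℓ t) := by
    funext t
    unfold nuFun heav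
    rcases le_or_gt t 0 with ht | ht
    · simp [clampTo_of_nonpos ht, not_lt.2 ht, hJ0]
    rcases le_or_gt ℓ t with ht' | ht'
    · simp only [clampTo_of_ge hℓ ht', sub_pos, not_lt.2 ht', if_false, mul_zero, zero_mul]
      exact s6.symm
    · simp [clampTo_of_mem ht.le ht'.le, ht, ht', hJ, hD₂]
  have hint : ∀ s, ∫ τ in (0 : ℝ)..s, omegaFun φ ψ a₁ a₂ b₁ b₂ ℓ τ
      = D₁ (clampTo ℓ s) - D₁ 0 := by
    intro s
    rw [hω, integral_eq_sub_of_hasDerivAt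
      (fun x _ => hasDerivAt_comp_clampTo hℓ hD1d s1 s2 x)
      (((contDiff_deriv_one hD1).continuous.comp (continuous_clampTo ℓ)).intervalIntegrable _ _),
      clampTo_of_nonpos le_rfl]
  have hnd := hasDerivAt_comp_clampTo hℓ hJd s7 s8
  refine ⟨fun s => (D₁ (clampTo ℓ s) - D₁ 0) / 2, fun s => J (clampTo ℓ s) / 2, ?_, ?_, ?_, ?_,
    ?_, ?_⟩
  · exact ((contDiff_comp_clampTo hℓ hD1 s1 s2 s4 s5).sub contDiff_const).div_const 2
  · exact (contDiff_comp_clampTo hℓ hJ2 (by rw [hJ', s7]) (by rw [hJ', s8]) (by rw [hJ', s9])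
      (by rw [hJ', s10])).div_const 2
  · intro s hs
    simp [clampTo_of_nonpos hs, hJ0]
  · intro s hs
    have h6 : J ℓ = 0 := s6
    simp only [clampTo_of_ge hℓ hs, h6]
    constructor <;> linarith
  · intro s hs
    have h := ((hnd s).div_const 2).deriv
    simp only [h, clampTo_of_mem hs.1 hs.2]
    constructor <;> ring
  · intro x t
    unfold Ufun heav
    rw [hint, hν]
    split_ifs with h
    · ring
    · simp [clampTo_of_nonpos (not_lt.1 h), hJ0]

/-- Away from its slit, the shifted potential is locally a travelling wave: it is one on each side
of the line `x = a`, zero below the slit and constant above it. -/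
theorem waveWithin_shift {V : ℝ → ℝ → ℝ} {g n : ℝ → ℝ} {ℓ c : ℝ}
    (hg : ContDiff ℝ 2 g) (hn : ContDiff ℝ 2 n) (h0 : ∀ s ≤ 0, g s = 0 ∧ n s = 0)
    (h1 : ∀ s, ℓ ≤ s → g s = c ∧ n s = 0)
    (hV : ∀ x t, V x t = g (t - |x|) - Real.sign x * n (t - |x|)) {a b : ℝ} {p : ℝ × ℝ}
    (hp : p ∉ slit a b ℓ) : WaveWithin univ (fun x t => V (x - a) (t - b)) p := by
  have hgn : ContDiff ℝ 2 (g + n) := hg.add hn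
  have hgn' : ContDiff ℝ 2 (g - n) := hg.sub hn
  unfold WaveWithin
  rw [nhdsWithin_univ]
  rcases lt_trichotomy p.1 a with hx | hx | hx
  · refine ⟨fun y => (g + n) (y - a - b), 0, by fun_prop, contDiff_const, ?_⟩
    filter_upwards [continuous_fst.tendsto p |>.eventually (gt_mem_nhds hx)] with q hq
    have e : q.1 - a < 0 := by linarith
    rw [hV, abs_of_neg e, Real.sign_of_neg e,
      show q.2 - b - -(q.1 - a) = q.1 + q.2 - a - b by ring]
    simp [travel]
  · have hc : Continuous fun q : ℝ × ℝ => q.2 - b - |q.1 - a| := by fun_prop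
    have hcp : p.2 - b - |p.1 - a| = p.2 - b := by simp [hx]
    rcases lt_or_ge p.2 b with ht | ht
    · refine ⟨0, 0, contDiff_const, contDiff_const, ?_⟩
      filter_upwards [(hc.tendsto p).eventually (gt_mem_nhds (show _ < (0 : ℝ) by
        rw [hcp]; linarith))] with q hq
      simp [hV, h0 _ hq.le, travel]
    · have ht' : b + ℓ < p.2 := by
        by_contra hcon
        exact hp ⟨hx, ht, not_lt.1 hcon⟩
      refine ⟨fun _ => c, 0, contDiff_const, contDiff_const, ?_⟩
      filter_upwards [(hc.tendsto p).eventually (lt_mem_nhds (show ℓ < _ by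
        rw [hcp]; linarith))] with q hq
      simp [hV, h1 _ hq.le, travel]
  · refine ⟨0, fun y => (g - n) (a - b - y), contDiff_const, by fun_prop, ?_⟩
    filter_upwards [continuous_fst.tendsto p |>.eventually (lt_mem_nhds hx)] with q hq
    have e : 0 < q.1 - a := by linarith
    rw [hV, abs_of_pos e, Real.sign_of_pos e,
      show q.2 - b - (q.1 - a) = a - b - (q.1 - q.2) by ring]
    simp [travel]

/-! ### The slit problem -/

/-- (Existence part of Theorem 5.3.) If `φ ∈ C²(ℝ)` and `ψ ∈ C¹(ℝ)`
satisfy conditions (S), then `u = u^D + U(x−a₁, t−b₁) − U(x−a₂, t−b₂)`, with `U` built from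
the jumps `ω, ν`, is a strengthened classical solution of the slit problem. -/
theorem strong_solution_existence (a₁ a₂ b₁ b₂ ℓ : ℝ)
    (hℓ : 0 < ℓ) (hb₁ : 0 < b₁) (ha : a₁ < a₂) (hb : b₁ + ℓ + a₂ - a₁ < b₂)
    (φ ψ : ℝ → ℝ) (hφ : ContDiff ℝ 2 φ) (hψ : ContDiff ℝ 1 ψ)
    (hS : CondS a₁ a₂ b₁ b₂ ℓ φ ψ) :
    IsStrongSolution a₁ a₂ b₁ b₂ ℓ φ ψ (fun x t =>
      uD φ ψ x t
        + Ufun (omegaFun φ ψ a₁ a₂ b₁ b₂ ℓ) (nuFun φ ψ a₁ a₂ b₁ b₂ ℓ) (x - a₁) (t - b₁)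
        - Ufun (omegaFun φ ψ a₁ a₂ b₁ b₂ ℓ) (nuFun φ ψ a₁ a₂ b₁ b₂ ℓ) (x - a₂) (t - b₂)) := by
  obtain ⟨F, H, hF, hH, hFH, hψ0⟩ := exists_uD_eq hφ hψ
  obtain ⟨g, n, hg, hn, h0, h1, hjump, hU⟩ := exists_Ufun_profiles hℓ hφ hψ hS
  have hF0 := hF.differentiable two_ne_zero
  have hH0 := hH.differentiable two_ne_zero
  have hg0 := hg.differentiable two_ne_zero
  have hn0 := hn.differentiable two_ne_zero
  have hD1 : ∀ t, D1fun φ ψ a₁ a₂ b₁ b₂ t = travel F H a₂ (b₂ + t) - travel F H a₁ (b₁ + t) := by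
    intro t
    rw [D1fun, hFH]
  have hD2 : ∀ t, D2fun φ ψ a₁ a₂ b₁ b₂ t = travel (deriv F) (deriv H) a₂ (b₂ + t)
      - travel (deriv F) (deriv H) a₁ (b₁ + t) := by
    intro t
    rw [D2fun, hFH, uX_travel hF0 hH0]
  set c := -D1fun φ ψ a₁ a₂ b₁ b₂ 0 with hc
  set V := Ufun (omegaFun φ ψ a₁ a₂ b₁ b₂ ℓ) (nuFun φ ψ a₁ a₂ b₁ b₂ ℓ) with hVdef
  rw [hFH]
  set u : ℝ → ℝ → ℝ := fun x t => travel F H x t + V (x - a₁) (t - b₁) - V (x - a₂) (t - b₂)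
    with hu
  have hwave : ∀ p : ℝ × ℝ, p ∉ slit a₁ b₁ ℓ → p ∉ slit a₂ b₂ ℓ → WaveWithin univ u p := by
    intro p hp1 hp2
    have hD : WaveWithin univ (travel F H) p :=
      ⟨F, H, hF, hH, Eventually.of_forall fun _ => rfl⟩
    exact (hD.add (waveWithin_shift hg hn h0 h1 hU hp1)).sub
      (waveWithin_shift hg hn h0 h1 hU hp2)
  have hΩ : ∀ p ∈ slitOmega a₁ a₂ b₁ b₂ ℓ, WaveWithin univ u p := fun p hp =>
    hwave p (fun h => hp.2 (Or.inl h)) (fun h => hp.2 (Or.inr h))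
  have hbot : ∀ p : ℝ × ℝ, p.2 = 0 → WaveWithin univ u p := fun p hp =>
    hwave p (fun h => by have := h.2.1; linarith) (fun h => by have := h.2.1; linarith)
  have hVzero : ∀ x t, t ≤ |x| → V x t = 0 := by
    intro x t ht
    simp [hU, h0 (t - |x|) (by linarith)]
  have hVconst : ∀ x t, ℓ ≤ t - |x| → V x t = c := by
    intro x t ht
    simp [hU, h1 (t - |x|) ht]
  have hVright : ∀ x t, 0 < x → V x t = (g - n) (t - x) := by
    intro x t hx
    simp [hU, abs_of_pos hx, Real.sign_of_pos hx]
  have hVleft : ∀ x t, x < 0 → V x t = (g + n) (t + x) := by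
    intro x t hx
    simp [hU, abs_of_neg hx, Real.sign_of_neg hx]
  have hRo : ∀ A, IsOpen (rightSide A) := fun A => isOpen_lt continuous_const continuous_fst
  have hLo : ∀ A, IsOpen (leftSide A) := fun A => isOpen_lt continuous_fst continuous_const
  -- near the first slit the second potential has not been switched on yet
  have near1 : ∀ t ∈ Icc (0 : ℝ) ℓ, ∀ᶠ q : ℝ × ℝ in 𝓝 (a₁, b₁ + t),
      V (q.1 - a₂) (q.2 - b₂) = 0 := by
    intro t ht
    have hcont : Continuous fun q : ℝ × ℝ => q.2 - b₂ - |q.1 - a₂| := by fun_prop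
    filter_upwards [(hcont.tendsto (a₁, b₁ + t)).eventually (gt_mem_nhds (show _ < (0 : ℝ) by
      have := abs_nonneg (a₁ - a₂)
      have := ht.2
      dsimp only
      linarith))] with q hq
    exact hVzero _ _ (by linarith)
  -- the light cone of the whole first slit has passed before the second slit begins
  have near2 : ∀ t ∈ Icc (0 : ℝ) ℓ, ∀ᶠ q : ℝ × ℝ in 𝓝 (a₂, b₂ + t),
      V (q.1 - a₁) (q.2 - b₁) = c := by
    intro t ht
    have hcont : Continuous fun q : ℝ × ℝ => q.2 - b₁ - |q.1 - a₁| := by fun_prop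
    filter_upwards [(hcont.tendsto (a₂, b₂ + t)).eventually (lt_mem_nhds (show ℓ < _ by
      have := ht.1
      dsimp only
      rw [abs_of_pos (by linarith)]
      linarith))] with q hq
    exact hVconst _ _ hq.le
  have dleft : ∀ (k : ℝ → ℝ) (A y : ℝ), deriv (fun y => k (y - A)) y = deriv k (y - A) :=
    fun k A y => deriv_comp_sub_const k A y
  have dright : ∀ (k : ℝ → ℝ) (A y : ℝ), deriv (fun y => k (A - y)) y = -deriv k (A - y) :=
    fun k A y => deriv_comp_const_sub k A y
  have hgn : ContDiff ℝ 2 (g + n) := hg.add hn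
  have hgn' : ContDiff ℝ 2 (g - n) := hg.sub hn
  have R1 := fun t (ht : t ∈ Icc (0 : ℝ) ℓ) => sideLim_of_wave
    (O := slitOmega a₁ a₂ b₁ b₂ ℓ) (hRo a₁) (u := u) (A := a₁) (τ := b₁ + t)
    (f := F) (h := H + fun y => (g - n) (a₁ - b₁ - y)) hF (hH.add (by fun_prop)) (by
      filter_upwards [nhdsWithin_le_nhds (near1 t ht), self_mem_nhdsWithin] with q hq hqS
      have hqS : a₁ < q.1 := hqS
      simp only [hu, hq, travel, Pi.add_apply, hVright _ _ (sub_pos.2 hqS)]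
      rw [show q.2 - b₁ - (q.1 - a₁) = a₁ - b₁ - (q.1 - q.2) by ring]
      ring)
  have L1 := fun t (ht : t ∈ Icc (0 : ℝ) ℓ) => sideLim_of_wave
    (O := slitOmega a₁ a₂ b₁ b₂ ℓ) (hLo a₁) (u := u) (A := a₁) (τ := b₁ + t)
    (f := F + fun y => (g + n) (y - (a₁ + b₁))) (h := H) (hF.add (by fun_prop)) hH (by
      filter_upwards [nhdsWithin_le_nhds (near1 t ht), self_mem_nhdsWithin] with q hq hqS
      have hqS : q.1 < a₁ := hqS
      simp only [hu, hq, travel, Pi.add_apply, hVleft _ _ (sub_neg.2 hqS)]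
      rw [show q.2 - b₁ + (q.1 - a₁) = q.1 + q.2 - (a₁ + b₁) by ring]
      ring)
  have R2 := fun t (ht : t ∈ Icc (0 : ℝ) ℓ) => sideLim_of_wave
    (O := slitOmega a₁ a₂ b₁ b₂ ℓ) (hRo a₂) (u := u) (A := a₂) (τ := b₂ + t)
    (f := F + fun _ => c) (h := H - fun y => (g - n) (a₂ - b₂ - y)) (hF.add contDiff_const)
    (hH.sub (by fun_prop)) (by
      filter_upwards [nhdsWithin_le_nhds (near2 t ht), self_mem_nhdsWithin] with q hq hqS
      have hqS : a₂ < q.1 := hqS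
      simp only [hu, hq, travel, Pi.add_apply, Pi.sub_apply, hVright _ _ (sub_pos.2 hqS)]
      rw [show q.2 - b₂ - (q.1 - a₂) = a₂ - b₂ - (q.1 - q.2) by ring]
      ring)
  have L2 := fun t (ht : t ∈ Icc (0 : ℝ) ℓ) => sideLim_of_wave
    (O := slitOmega a₁ a₂ b₁ b₂ ℓ) (hLo a₂) (u := u) (A := a₂) (τ := b₂ + t)
    (f := F - fun y => (g + n) (y - (a₂ + b₂))) (h := H + fun _ => c) (hF.sub (by fun_prop))
    (hH.add contDiff_const) (by
      filter_upwards [nhdsWithin_le_nhds (near2 t ht), self_mem_nhdsWithin] with q hq hqS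
      have hqS : q.1 < a₂ := hqS
      simp only [hu, hq, travel, Pi.add_apply, Pi.sub_apply, hVleft _ _ (sub_neg.2 hqS)]
      rw [show q.2 - b₂ + (q.1 - a₂) = q.1 + q.2 - (a₂ + b₂) by ring]
      ring)
  refine ⟨⟨fun p hp => (hΩ p hp).contDiffAt.contDiffWithinAt, ?_, ?_, ?_, ?_, ?_, ?_, ?_⟩,
    fun p hp => (hΩ p hp).wave_eq, ?_, ?_, ?_⟩
  · rintro p (hp | hp)
    · exact ((hΩ p hp).contDiffAt.of_le one_le_two).contDiffWithinAt
    · exact ((hbot p hp).contDiffAt.of_le one_le_two).contDiffWithinAt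
  · exact fun t ht => ⟨⟨_, (R1 t ht).1⟩, ⟨_, (L1 t ht).1⟩⟩
  · exact fun t ht => ⟨⟨_, (R2 t ht).1⟩, ⟨_, (L2 t ht).1⟩⟩
  · exact fun t ht => ⟨⟨_, (R1 t ht).2.1⟩, ⟨_, (L1 t ht).2.1⟩⟩
  · exact fun t ht => ⟨⟨_, (R2 t ht).2.1⟩, ⟨_, (L2 t ht).2.1⟩⟩
  · exact fun t ht => ⟨⟨_, (R1 t ht).2.2⟩, ⟨_, (L1 t ht).2.2⟩⟩
  · exact fun t ht => ⟨⟨_, (R2 t ht).2.2⟩, ⟨_, (L2 t ht).2.2⟩⟩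
  · intro x
    have e1 := hVzero (x - a₁) (0 - b₁) (by linarith [abs_nonneg (x - a₁)])
    have e2 := hVzero (x - a₂) (0 - b₂) (by linarith [abs_nonneg (x - a₂)])
    have e3 : travel F H x 0 = φ x := by
      rw [← hFH]
      simp [uD]
    simp only [hu, e1, e2, e3, add_zero, sub_zero]
  · intro x
    rw [← hψ0 x, ← uT_travel hF0 hH0]
    refine uT_congr (p := (x, 0)) ?_
    filter_upwards [(continuous_snd.tendsto ((x, 0) : ℝ × ℝ)).eventually (gt_mem_nhds hb₁)]
      with q hq
    have e1 := hVzero (q.1 - a₁) (q.2 - b₁) (by linarith [abs_nonneg (q.1 - a₁)])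
    have e2 := hVzero (q.1 - a₂) (q.2 - b₂) (by linarith [abs_nonneg (q.1 - a₂)])
    simp only [hu, e1, e2, add_zero, sub_zero]
  · intro t ht
    obtain ⟨j1, j2⟩ := hjump t ht
    rw [hD1 t] at j1
    rw [hD2 t] at j2
    have dF1 : ∀ y, deriv (F + fun y => (g + n) (y - (a₁ + b₁))) y
        = deriv F y + (deriv g (y - (a₁ + b₁)) + deriv n (y - (a₁ + b₁))) := by
      intro y
      rw [deriv_add (hF0 y) (by fun_prop), dleft, deriv_add (hg0 _) (hn0 _)]
    have dH1 : ∀ y, deriv (H + fun y => (g - n) (a₁ - b₁ - y)) y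
        = deriv H y - (deriv g (a₁ - b₁ - y) - deriv n (a₁ - b₁ - y)) := by
      intro y
      rw [deriv_add (hH0 y) (by fun_prop), dright, deriv_sub (hg0 _) (hn0 _)]
      ring
    have dF2 : ∀ y, deriv (F - fun y => (g + n) (y - (a₂ + b₂))) y
        = deriv F y - (deriv g (y - (a₂ + b₂)) + deriv n (y - (a₂ + b₂))) := by
      intro y
      rw [deriv_sub (hF0 y) (by fun_prop), dleft, deriv_add (hg0 _) (hn0 _)]
    have dH2 : ∀ y, deriv (H - fun y => (g - n) (a₂ - b₂ - y)) y
        = deriv H y + (deriv g (a₂ - b₂ - y) - deriv n (a₂ - b₂ - y)) := by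
      intro y
      rw [deriv_sub (hH0 y) (by fun_prop), dright, deriv_sub (hg0 _) (hn0 _), sub_neg_eq_add]
    have dFc : ∀ y, deriv (F + fun _ => c) y = deriv F y := by
      intro y
      rw [deriv_add (hF0 y) (by fun_prop), deriv_const, add_zero]
    have dHc : ∀ y, deriv (H + fun _ => c) y = deriv H y := by
      intro y
      rw [deriv_add (hH0 y) (by fun_prop), deriv_const, add_zero]
    have k1 : a₁ + (b₁ + t) - (a₁ + b₁) = t := by ring
    have k2 : a₂ + (b₂ + t) - (a₂ + b₂) = t := by ring
    have k3 : a₁ - b₁ - (a₁ - (b₁ + t)) = t := by ring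
    have k4 : a₂ - b₂ - (a₂ - (b₂ + t)) = t := by ring
    unfold travel at j1 j2
    refine ⟨⟨_, (L1 t ht).1, ?_⟩, ⟨_, (R1 t ht).1, ?_⟩, ⟨_, (L1 t ht).2.1, ?_⟩,
      ⟨_, (R1 t ht).2.1, ?_⟩⟩
    · convert (R2 t ht).1 using 1
      simp only [travel, Pi.add_apply, Pi.sub_apply, k1, k4]
      linarith
    · convert (L2 t ht).1 using 1
      simp only [travel, Pi.add_apply, Pi.sub_apply, k2, k3]
      linarith
    · convert (R2 t ht).2.1 using 1
      simp only [travel, dF1, dH2, dFc, k1, k4]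
      linarith
    · convert (L2 t ht).2.1 using 1
      simp only [travel, dF2, dH1, dHc, k2, k3]
      linarith
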